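/- Suppose g is monotone in the sense ⟨g(y₁) − g(y₂), y₁ − y₂⟩ ≤ 0 for all y₁, y₂ ∈ Ω, and L-Lipschitz: ‖g(y₁) − g(y₂)‖ ≤ L‖y₁ − y₂‖ for all y₁, y₂ ∈ Ω. Suppose some y* ∈ Ω solves the variational inequality ⟨g(y*), y − y*⟩ ≤ 0 for all y ∈ Ω. Let 0 < t < (√2·L)⁻¹ and define the extra pseudo-gradient sequence ŷ_s = P_Ω(y_s + t·g(y_s)), y_{s+1} = P_Ω(y_s + t·g(ŷ_s)) from any y₀ ∈ Ω. Then the series Σ_{s=0}^∞ ‖y_s − ŷ_s‖² and Σ_{s=0}^∞ ‖ŷ_s − y_{s+1}‖² converge; in particular ‖y_s − ŷ_s‖ → 0 and ‖ŷ_s − y_{s+1}‖ → 0 as s → ∞. -/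

import Mathlib

open Matrix Filter
open scoped BigOperators

noncomputable section

/-- Vectors in ℝ^k. -/
abbrev Vec (k : ℕ) := Fin k → ℝ

/-- Standard Euclidean inner product on ℝ^k. -/
def ip {k : ℕ} (u v : Vec k) : ℝ := ∑ i, u i * v i

/-- Standard Euclidean norm on ℝ^k. -/
def nrm {k : ℕ} (u : Vec k) : ℝ := Real.sqrt (ip u u)

/-- The space ℝⁿ × ℝⁿ × ℝᵐ of triples y = (x, λ, v). -/
abbrev Triple (n m : ℕ) := Vec n × Vec n × Vec m

/-- Euclidean inner product on the triple space. -/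
def ipT {n m : ℕ} (y z : Triple n m) : ℝ :=
  ip y.1 z.1 + ip y.2.1 z.2.1 + ip y.2.2 z.2.2

/-- Euclidean norm on the triple space. -/
def nrmT {n m : ℕ} (y : Triple n m) : ℝ := Real.sqrt (ipT y y)

/-- Ω = ℝ₊ⁿ × ℝ₊ⁿ × ℝ₊ᵐ. -/
def Om (n m : ℕ) : Set (Triple n m) :=
  {y | (∀ j, 0 ≤ y.1 j) ∧ (∀ j, 0 ≤ y.2.1 j) ∧ (∀ i, 0 ≤ y.2.2 i)}

/-- The operator g(x, λ, v) = ((I − A)ᵀλ − p(x) − Bᵀv, c(λ) − (I − A)x, Bx − r(v)). -/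
def gOp {n m : ℕ} (A : Matrix (Fin n) (Fin n) ℝ) (B : Matrix (Fin m) (Fin n) ℝ)
    (p c : Vec n → Vec n) (r : Vec m → Vec m) (y : Triple n m) : Triple n m :=
  ((1 - A)ᵀ *ᵥ y.2.1 - p y.1 - Bᵀ *ᵥ y.2.2,
   c y.2.1 - (1 - A) *ᵥ y.1,
   B *ᵥ y.1 - r y.2.2)

/-- P_Ω : componentwise positive part (Euclidean projection onto Ω). -/
def projOm {n m : ℕ} (y : Triple n m) : Triple n m :=
  (fun j => max (y.1 j) 0, fun j => max (y.2.1 j) 0, fun i => max (y.2.2 i) 0)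

/-!
Testing the variational inequality of the corrector `y_{s+1}` at `y*` and that of the predictor
`ŷ_s` at `y_{s+1}`, and using `⟨g(ŷ_s), ŷ_s - y*⟩ ≤ 0`, leaves a single cross term
`2t⟨g(y_s) - g(ŷ_s), ŷ_s - y_{s+1}⟩`. By Cauchy–Schwarz, the Lipschitz bound and AM-GM it is at
most `tL(‖y_s - ŷ_s‖² + ‖ŷ_s - y_{s+1}‖²)`, so `‖y_s - y*‖²` decreases at each step by at least
`1 - tL` times that sum of squares. For `tL < 1` the decrements telescope to a convergent series.
-/

section Real

theorem mul_lt_one_of_lt_inv_sqrt_two_mul {t L : ℝ} (hL : 0 < L) (ht₀ : 0 ≤ t)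
    (ht : t < (√2 * L)⁻¹) : t * L < 1 := by
  have hpos : 0 < √2 * L := by positivity
  calc t * L ≤ t * (√2 * L) := by
        gcongr
        exact le_mul_of_one_le_left hL.le (Real.one_le_sqrt.mpr one_le_two)
    _ < (√2 * L)⁻¹ * (√2 * L) := mul_lt_mul_of_pos_right ht hpos
    _ = 1 := inv_mul_cancel₀ hpos.ne'

theorem summable_of_le_sub_succ {f u : ℕ → ℝ} (hf : ∀ s, 0 ≤ f s) (hu : ∀ s, 0 ≤ u s)
    (h : ∀ s, f s ≤ u s - u (s + 1)) : Summable f := by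
  refine summable_of_sum_range_le (c := u 0) hf fun N => ?_
  calc ∑ s ∈ Finset.range N, f s
      ≤ ∑ s ∈ Finset.range N, (u s - u (s + 1)) := Finset.sum_le_sum fun s _ => h s
    _ = u 0 - u N := Finset.sum_range_sub' u N
    _ ≤ u 0 := sub_le_self _ (hu N)

theorem tendsto_cofinite_zero_of_summable_sq {ι : Type*} {f : ι → ℝ}
    (hf : Summable fun i => f i ^ 2) : Tendsto f cofinite (nhds 0) := by
  rw [tendsto_zero_iff_abs_tendsto_zero]
  simpa only [Function.comp_def, Real.sqrt_sq_eq_abs, Real.sqrt_zero] using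
    hf.tendsto_cofinite_zero.sqrt

end Real

section Extragradient

open scoped NNReal RealInnerProductSpace

variable {E : Type*} [SeminormedAddCommGroup E] [InnerProductSpace ℝ E]

/-- `P` is a projection onto `K`, encoded by the variational inequality, which for convex `K` says
that `P u` is a nearest point to `u` in `K` (see `norm_eq_iInf_iff_real_inner_le_zero`). -/
structure IsVariationalProj (K : Set E) (P : E → E) : Prop where
  mem : ∀ u, P u ∈ K
  inner_nonpos : ∀ u, ∀ z ∈ K, ⟪u - P u, z - P u⟫ ≤ 0

/-- `y` and `yh` are the iterates and the predictors of the extra pseudo-gradient method with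
projection `P`, operator `g` and step `t`. The sign convention is that of an ascent method: `g` is
added, and monotonicity of `g` means `⟪g a - g b, a - b⟫ ≤ 0`. -/
structure IsExtragradientSeq (P g : E → E) (t : ℝ) (y yh : ℕ → E) : Prop where
  predictor : ∀ s, yh s = P (y s + t • g (y s))
  corrector : ∀ s, y (s + 1) = P (y s + t • g (yh s))

variable {K : Set E} {P g : E → E} {L : ℝ≥0} {t : ℝ} {y yh : ℕ → E} {z : E}

theorem inner_nonpos_of_monotone_of_variationalInequality
    (hmono : ∀ a ∈ K, ∀ b ∈ K, ⟪g a - g b, a - b⟫ ≤ 0) (hz : z ∈ K)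
    (hVI : ∀ a ∈ K, ⟪g z, a - z⟫ ≤ 0) : ∀ a ∈ K, ⟪g a, a - z⟫ ≤ 0 := by
  intro a ha
  have hsub := hmono a ha z hz
  rw [inner_sub_left] at hsub
  linarith [hVI a ha]

theorem IsVariationalProj.norm_sub_sq_le (hP : IsVariationalProj K P) (hz : z ∈ K) (a v : E) :
    ‖P (a + v) - z‖ ^ 2 ≤ ‖a - z‖ ^ 2 - ‖a - P (a + v)‖ ^ 2 + 2 * ⟪v, P (a + v) - z⟫ := by
  set b := P (a + v)
  have hexpand : ‖a - z‖ ^ 2 = ‖a - b‖ ^ 2 + 2 * ⟪a - b, b - z⟫ + ‖b - z‖ ^ 2 := by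
    rw [← norm_add_sq_real, sub_add_sub_cancel]
  have hproj : 0 ≤ ⟪a - b, b - z⟫ + ⟪v, b - z⟫ := by
    have hle : ⟪a + v - b, z - b⟫ ≤ 0 := hP.inner_nonpos (a + v) z hz
    rwa [add_sub_right_comm, ← neg_sub b z, inner_neg_right, neg_nonpos, inner_add_left] at hle
  linarith

theorem two_mul_inner_sub_le_of_lipschitzOnWith (hg : LipschitzOnWith L g K) {a b : E} (ha : a ∈ K)
    (hb : b ∈ K) (w : E) : 2 * ⟪g a - g b, w⟫ ≤ L * (‖a - b‖ ^ 2 + ‖w‖ ^ 2) := by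
  calc 2 * ⟪g a - g b, w⟫
      ≤ 2 * (‖g a - g b‖ * ‖w‖) := by gcongr; exact real_inner_le_norm _ _
    _ ≤ 2 * (L * ‖a - b‖ * ‖w‖) := by gcongr; exact hg.norm_sub_le ha hb
    _ = L * (2 * ‖a - b‖ * ‖w‖) := by ring
    _ ≤ L * (‖a - b‖ ^ 2 + ‖w‖ ^ 2) := by gcongr; exact two_mul_le_add_sq _ _

namespace IsExtragradientSeq

theorem predictor_mem (h : IsExtragradientSeq P g t y yh) (hP : IsVariationalProj K P) (s : ℕ) :
    yh s ∈ K :=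
  h.predictor s ▸ hP.mem _

theorem mem (h : IsExtragradientSeq P g t y yh) (hP : IsVariationalProj K P) (hy₀ : y 0 ∈ K) :
    ∀ s, y s ∈ K
  | 0 => hy₀
  | s + 1 => h.corrector s ▸ hP.mem _

theorem mul_norm_sq_add_norm_sq_le (h : IsExtragradientSeq P g t y yh) (hP : IsVariationalProj K P)
    (hy₀ : y 0 ∈ K) (hg : LipschitzOnWith L g K) (ht : 0 ≤ t) (hz : z ∈ K)
    (hminty : ∀ a ∈ K, ⟪g a, a - z⟫ ≤ 0) (s : ℕ) :
    (1 - t * L) * (‖y s - yh s‖ ^ 2 + ‖yh s - y (s + 1)‖ ^ 2) ≤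
      ‖y s - z‖ ^ 2 - ‖y (s + 1) - z‖ ^ 2 := by
  have hyh := h.predictor_mem hP s
  have hy := h.mem hP hy₀
  have hcorr := hP.norm_sub_sq_le hz (y s) (t • g (yh s))
  have hpred := hP.norm_sub_sq_le (hy (s + 1)) (y s) (t • g (y s))
  rw [← h.corrector, real_inner_smul_left] at hcorr
  rw [← h.predictor, real_inner_smul_left] at hpred
  have hsplit : ⟪g (yh s), y (s + 1) - z⟫ + ⟪g (y s), yh s - y (s + 1)⟫ =
      ⟪g (yh s), yh s - z⟫ + ⟪g (y s) - g (yh s), yh s - y (s + 1)⟫ := by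
    simp only [inner_sub_left, inner_sub_right]
    ring
  have hminty_step := mul_le_mul_of_nonneg_left (hminty (yh s) hyh) ht
  have hcross := mul_le_mul_of_nonneg_left
    (two_mul_inner_sub_le_of_lipschitzOnWith hg (hy s) hyh (yh s - y (s + 1))) ht
  linear_combination hcorr + hpred + 2 * hminty_step + hcross + 2 * t * hsplit

theorem summable_norm_sq_add_norm_sq (h : IsExtragradientSeq P g t y yh)
    (hP : IsVariationalProj K P) (hy₀ : y 0 ∈ K) (hg : LipschitzOnWith L g K) (ht : 0 ≤ t)
    (htL : t * L < 1) (hz : z ∈ K) (hminty : ∀ a ∈ K, ⟪g a, a - z⟫ ≤ 0) :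
    Summable fun s => ‖y s - yh s‖ ^ 2 + ‖yh s - y (s + 1)‖ ^ 2 := by
  have hpos : 0 < 1 - t * L := sub_pos.mpr htL
  rw [← summable_mul_left_iff hpos.ne']
  exact summable_of_le_sub_succ (fun s => by positivity) (fun s => sq_nonneg ‖y s - z‖)
    (h.mul_norm_sq_add_norm_sq_le hP hy₀ hg ht hz hminty)

end IsExtragradientSeq

theorem stmt15_general (hP : IsVariationalProj K P) (hg : LipschitzOnWith L g K) (hz : z ∈ K)
    (hminty : ∀ a ∈ K, ⟪g a, a - z⟫ ≤ 0) (ht : 0 ≤ t) (htL : t * L < 1) (hy₀ : y 0 ∈ K)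
    (h : IsExtragradientSeq P g t y yh) :
    Summable (fun s => ‖y s - yh s‖ ^ 2) ∧
    Summable (fun s => ‖yh s - y (s + 1)‖ ^ 2) ∧
    Tendsto (fun s => ‖y s - yh s‖) atTop (nhds 0) ∧
    Tendsto (fun s => ‖yh s - y (s + 1)‖) atTop (nhds 0) := by
  have hsum := h.summable_norm_sq_add_norm_sq hP hy₀ hg ht htL hz hminty
  have hpred : Summable fun s => ‖y s - yh s‖ ^ 2 :=
    hsum.of_nonneg_of_le (fun _ => sq_nonneg _) fun _ => le_add_of_nonneg_right (sq_nonneg _)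
  have hcorr : Summable fun s => ‖yh s - y (s + 1)‖ ^ 2 :=
    hsum.of_nonneg_of_le (fun _ => sq_nonneg _) fun _ => le_add_of_nonneg_left (sq_nonneg _)
  rw [← Nat.cofinite_eq_atTop]
  exact ⟨hpred, hcorr, tendsto_cofinite_zero_of_summable_sq hpred,
    tendsto_cofinite_zero_of_summable_sq hcorr⟩

end Extragradient

section Triple

variable {n m : ℕ}

theorem ipT_comm (y z : Triple n m) : ipT y z = ipT z y := by
  simp only [ipT, ip, mul_comm]

theorem ipT_add_left (x y z : Triple n m) : ipT (x + y) z = ipT x z + ipT y z := by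
  simp only [ipT, ip, Prod.fst_add, Prod.snd_add, Pi.add_apply, add_mul, Finset.sum_add_distrib]
  ring

theorem ipT_smul_left (t : ℝ) (y z : Triple n m) : ipT (t • y) z = t * ipT y z := by
  simp only [ipT, ip, Prod.smul_fst, Prod.smul_snd, Pi.smul_apply, smul_eq_mul, mul_add,
    Finset.mul_sum, mul_assoc]

theorem ip_self_nonneg {k : ℕ} (u : Vec k) : 0 ≤ ip u u :=
  Finset.sum_nonneg fun i _ => mul_self_nonneg (u i)

theorem ipT_self_nonneg (y : Triple n m) : 0 ≤ ipT y y :=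
  add_nonneg (add_nonneg (ip_self_nonneg _) (ip_self_nonneg _)) (ip_self_nonneg _)

theorem ip_sub_posPart_nonpos {k : ℕ} (u z : Vec k) (hz : ∀ i, 0 ≤ z i) :
    ip (u - fun i => max (u i) 0) (z - fun i => max (u i) 0) ≤ 0 := by
  refine Finset.sum_nonpos fun i _ => ?_
  simp only [Pi.sub_apply]
  rcases le_total (u i) 0 with hu | hu
  · simpa only [max_eq_right hu, sub_zero] using mul_nonpos_of_nonpos_of_nonneg hu (hz i)
  · simp only [max_eq_left hu, sub_self, zero_mul, le_refl]

end Triple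

section EuclideanTriple

variable {n m : ℕ}

/-- The space of triples with the Euclidean structure `ipT`, `nrmT`. It is a separate type because
the norm Mathlib puts on `Triple n m` is the sup norm. -/
def EuclideanTriple (n m : ℕ) : Type := Triple n m

namespace EuclideanTriple

instance : AddCommGroup (EuclideanTriple n m) := inferInstanceAs (AddCommGroup (Triple n m))

instance : Module ℝ (EuclideanTriple n m) := inferInstanceAs (Module ℝ (Triple n m))

instance : PreInnerProductSpace.Core ℝ (EuclideanTriple n m) where
  inner := ipT
  conj_inner_symm _ _ := ipT_comm _ _
  re_inner_nonneg := ipT_self_nonneg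
  add_left := ipT_add_left
  smul_left x y r := ipT_smul_left r x y

instance : SeminormedAddCommGroup (EuclideanTriple n m) :=
  InnerProductSpace.Core.toSeminormedAddCommGroup (𝕜 := ℝ)

instance : InnerProductSpace ℝ (EuclideanTriple n m) := InnerProductSpace.ofCore inferInstance

end EuclideanTriple

theorem isVariationalProj_projOm :
    IsVariationalProj (E := EuclideanTriple n m) (Om n m) projOm where
  mem _ := ⟨fun _ => le_max_right _ _, fun _ => le_max_right _ _, fun _ => le_max_right _ _⟩
  inner_nonpos u z hz :=
    add_nonpos (add_nonpos (ip_sub_posPart_nonpos u.1 z.1 hz.1)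
      (ip_sub_posPart_nonpos u.2.1 z.2.1 hz.2.1)) (ip_sub_posPart_nonpos u.2.2 z.2.2 hz.2.2)

end EuclideanTriple

/-- for 0 < t < (√2·L)⁻¹ the series Σ‖y_s − ŷ_s‖² and Σ‖ŷ_s − y_{s+1}‖²
converge; in particular ‖y_s − ŷ_s‖ → 0 and ‖ŷ_s − y_{s+1}‖ → 0. -/
theorem stmt15 {n m : ℕ} (hn : 0 < n) (hm : 0 < m)
    (A : Matrix (Fin n) (Fin n) ℝ) (B : Matrix (Fin m) (Fin n) ℝ)
    (p c : Vec n → Vec n) (r : Vec m → Vec m)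
    (L : ℝ)
    (hmono : ∀ y₁ ∈ Om n m, ∀ y₂ ∈ Om n m,
      ipT (gOp A B p c r y₁ - gOp A B p c r y₂) (y₁ - y₂) ≤ 0)
    (hlip : ∀ y₁ ∈ Om n m, ∀ y₂ ∈ Om n m,
      nrmT (gOp A B p c r y₁ - gOp A B p c r y₂) ≤ L * nrmT (y₁ - y₂))
    (ys : Triple n m) (hys : ys ∈ Om n m)
    (hVI : ∀ y ∈ Om n m, ipT (gOp A B p c r ys) (y - ys) ≤ 0)
    (t : ℝ) (ht0 : 0 < t) (ht1 : t < (Real.sqrt 2 * L)⁻¹)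
    (y yh : ℕ → Triple n m) (hy0 : y 0 ∈ Om n m)
    (hyh : ∀ s : ℕ, yh s = projOm (y s + t • gOp A B p c r (y s)))
    (hiter : ∀ s : ℕ, y (s + 1) = projOm (y s + t • gOp A B p c r (yh s))) :
    Summable (fun s : ℕ => nrmT (y s - yh s) ^ 2) ∧
    Summable (fun s : ℕ => nrmT (yh s - y (s + 1)) ^ 2) ∧
    Tendsto (fun s : ℕ => nrmT (y s - yh s)) atTop (nhds 0) ∧
    Tendsto (fun s : ℕ => nrmT (yh s - y (s + 1))) atTop (nhds 0) := by
  have hL : 0 < L := pos_of_mul_pos_right (inv_pos.mp (ht0.trans ht1)) (Real.sqrt_nonneg 2)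
  lift L to NNReal using hL.le
  exact stmt15_general (E := EuclideanTriple n m) isVariationalProj_projOm
    (lipschitzOnWith_iff_norm_sub_le.mpr hlip) hys
    (inner_nonpos_of_monotone_of_variationalInequality hmono hys hVI) ht0.le
    (mul_lt_one_of_lt_inv_sqrt_two_mul hL ht0.le ht1) hy0 ⟨hyh, hiter⟩
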